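/- arXiv:math/9810001 — 3 statements merged into one kernel-verified Lean document; each statement's English description precedes it below -/
import Mathlib

section
/- The 3×3 integer matrix A_{1,0} = [[2,0,-1],[0,2,-2],[-1,-2,2]] satisfies: (a) it is a symmetric generalized Cartan matrix (symmetric, all diagonal entries 2, all off-diagonal entries nonpositive); (b) it has rank 3 over ℚ; (c) the real quadratic form x ↦ xᵀAx on ℝ³ is equivalent to the weighted sum of squares with weights (1,1,−1), i.e. A is hyperbolic of rank 3; (d) there exists c ∈ ℚ³ with Ac = −(1,1,1)ᵀ and cᵀAc < 0 (a lattice Weyl vector of negative square). -/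
open Matrix

/-! The simple roots `α₁`, `α₂` are orthogonal of square `2`, and `α₁ + 2α₂ + 2α₃` is orthogonal to
both, of square `-2`. These three integral vectors diagonalize the form over `ℚ`, and rescaling them
by the inverse square roots of the absolute values of their squares leaves only the signs.
The vector `c = (2, 9/2, 5)` solves `Ac = -(1,1,1)ᵀ`, so its square is minus the sum of its
coordinates. -/

section

variable {n : Type*} [Fintype n]

theorem det_map_ne_zero [DecidableEq n] {R S : Type*} [CommRing R] [CommRing S] {f : R →+* S}
    (hf : Function.Injective f) {A : Matrix n n R} (hA : A.det ≠ 0) : (A.map f).det ≠ 0 := by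
  rw [← RingHom.mapMatrix_apply, ← RingHom.map_det]
  exact (map_ne_zero_iff f hf).mpr hA

theorem exists_ne_zero_mul_mul_self_eq_sign (x : ℝ) :
    ∃ r : ℝ, r ≠ 0 ∧ r * x * r = SignType.sign x := by
  rcases eq_or_ne x 0 with rfl | hx
  · exact ⟨1, one_ne_zero, by simp⟩
  · have hsqrt : √|x| ≠ 0 := by positivity
    refine ⟨(√|x|)⁻¹, inv_ne_zero hsqrt, ?_⟩
    calc (√|x|)⁻¹ * x * (√|x|)⁻¹ = x / (√|x| * √|x|) := by field_simp
      _ = SignType.sign x * |x| / |x| := by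
          rw [Real.mul_self_sqrt (abs_nonneg x), sign_mul_abs]
      _ = SignType.sign x := mul_div_cancel_right₀ _ (abs_ne_zero.mpr hx)

theorem exists_transpose_mul_mul_eq_diagonal_sign [DecidableEq n] {A Q : Matrix n n ℝ}
    {d : n → ℝ} (hQ : IsUnit Q.det) (h : Qᵀ * A * Q = diagonal d) :
    ∃ P : Matrix n n ℝ, IsUnit P.det ∧
      Pᵀ * A * P = diagonal fun i ↦ (SignType.sign (d i) : ℝ) := by
  choose r hr_ne hr using fun i ↦ exists_ne_zero_mul_mul_self_eq_sign (d i)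
  refine ⟨Q * diagonal r, ?_, ?_⟩
  · rw [det_mul, det_diagonal]
    exact hQ.mul (Finset.prod_ne_zero_iff.mpr fun i _ ↦ hr_ne i).isUnit
  · calc (Q * diagonal r)ᵀ * A * (Q * diagonal r)
        = diagonal r * (Qᵀ * A * Q) * diagonal r := by
          simp only [transpose_mul, diagonal_transpose, Matrix.mul_assoc]
      _ = diagonal fun i ↦ (SignType.sign (d i) : ℝ) := by
          simp only [h, diagonal_mul_diagonal, hr]

theorem exists_transpose_mul_map_mul_eq_diagonal_sign [DecidableEq n] {R : Type*} [CommRing R]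
    {f : R →+* ℝ} (hf : Function.Injective f) {A Q : Matrix n n R} {d : n → R}
    (hQ : Q.det ≠ 0) (h : Qᵀ * A * Q = diagonal d) :
    ∃ P : Matrix n n ℝ, IsUnit P.det ∧
      Pᵀ * A.map f * P = diagonal fun i ↦ (SignType.sign (f (d i)) : ℝ) := by
  refine exists_transpose_mul_mul_eq_diagonal_sign (Q := Q.map f) ?_ ?_
  · exact (det_map_ne_zero hf hQ).isUnit
  · rw [← transpose_map, ← Matrix.map_mul, ← Matrix.map_mul, h, diagonal_map (map_zero f)]

theorem dotProduct_mulVec_eq_neg_sum {R : Type*} [NonAssocRing R] {A : Matrix n n R} {c : n → R}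
    (h : ∀ i, (A *ᵥ c) i = -1) : c ⬝ᵥ A *ᵥ c = -∑ i, c i := by
  simp only [dotProduct, h, mul_neg_one, Finset.sum_neg_distrib]

end

/-- The matrix `A_{1,0}` from Nikulin's list of all twelve symmetric hyperbolic
generalized Cartan matrices of rank 3 with finite-volume fundamental chamber and
lattice Weyl vector of negative square:
(a) it is a symmetric generalized Cartan matrix;
(b) it has rank 3 over ℚ;
(c) the real quadratic form x ↦ xᵀAx is equivalent to the weighted sum of squares with
    weights (1,1,-1,0,…,0), i.e. A is hyperbolic of rank 3;
(d) it has a lattice Weyl vector of negative square: there is c ∈ ℚ^3 with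
    Ac = -(1,…,1)ᵀ and cᵀAc < 0. -/
theorem stmt_0 :
    let A : Matrix (Fin 3) (Fin 3) ℤ :=
      !![2, 0, -1;
        0, 2, -2;
        -1, -2, 2]
    -- (a) symmetric generalized Cartan matrix
    (Aᵀ = A ∧ (∀ i, A i i = 2) ∧ (∀ i j, i ≠ j → A i j ≤ 0)) ∧
    -- (b) rank 3 over ℚ
    (A.map ((↑·) : ℤ → ℚ)).rank = 3 ∧
    -- (c) hyperbolic of rank 3: x ↦ xᵀAx over ℝ is equivalent to the weighted
    -- sum of squares with weights (1,1,-1,0,…,0)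
    (∃ P : Matrix (Fin 3) (Fin 3) ℝ, IsUnit P.det ∧
      Pᵀ * A.map ((↑·) : ℤ → ℝ) * P = Matrix.diagonal ![(1:ℝ),1,-1]) ∧
    -- (d) lattice Weyl vector of negative square
    (∃ c : Fin 3 → ℚ, (∀ i, (A.map ((↑·) : ℤ → ℚ)).mulVec c i = -1) ∧
      c ⬝ᵥ (A.map ((↑·) : ℤ → ℚ)).mulVec c < 0) := by
  intro A
  let Q : Matrix (Fin 3) (Fin 3) ℤ := !![1, 0, 1; 0, 1, 2; 0, 0, 2]
  let c : Fin 3 → ℚ := ![2, 9 / 2, 5]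
  have hdetA : A.det ≠ 0 := by decide
  have hdetQ : Q.det ≠ 0 := by decide
  have horthogonal : Qᵀ * A * Q = diagonal ![2, 2, -2] := by decide
  have hweyl : ∀ i, (A.map ((↑·) : ℤ → ℚ) *ᵥ c) i = -1 := by
    intro i
    fin_cases i <;> norm_num [A, c, mulVec, dotProduct, Fin.sum_univ_succ]
  refine ⟨⟨by decide, by decide, by simp [A, Fin.forall_fin_succ]⟩, ?_, ?_, c, hweyl, ?_⟩
  · exact rank_of_det_ne_zero (det_map_ne_zero (f := Int.castRingHom ℚ) Int.cast_injective hdetA)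
  · obtain ⟨P, hP, hPA⟩ := exists_transpose_mul_map_mul_eq_diagonal_sign
      (f := Int.castRingHom ℝ) Int.cast_injective hdetQ horthogonal
    refine ⟨P, hP, hPA.trans (congrArg diagonal ?_)⟩
    ext i
    fin_cases i <;> simp
  · rw [dotProduct_mulVec_eq_neg_sum hweyl]
    norm_num [c, Fin.sum_univ_succ]
end

section
/- The 5×5 integer matrix A_{1,III} = [[2,-2,-6,-6,-2],[-2,2,0,-6,-7],[-6,0,2,-2,-6],[-6,-6,-2,2,0],[-2,-7,-6,0,2]] satisfies: (a) it is a symmetric generalized Cartan matrix (symmetric, all diagonal entries 2, all off-diagonal entries nonpositive); (b) it has rank 3 over ℚ; (c) the real quadratic form x ↦ xᵀAx on ℝ⁵ is equivalent to the weighted sum of squares with weights (1,1,−1,0,0), i.e. A is hyperbolic of rank 3; (d) there exists c ∈ ℚ⁵ with Ac = −(1,1,1,1,1)ᵀ and cᵀAc < 0 (a lattice Weyl vector of negative square). -/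
open Matrix

/-!
The simple roots `α₂`, `α₃` are orthogonal of square `2`, and `α₁ + α₂ + 3α₃` is orthogonal to both,
of square `-18`. Since `-α₁ + 2α₂ - 2α₃ + α₄` and `-3α₁ + 4α₂ - 3α₃ + 2α₅` lie in the radical, these
five vectors diagonalize the form over `ℚ`, with diagonal `(2, 2, -18, 0, 0)`. Counting the nonzero
entries gives the rank, rescaling the vectors by real square roots gives the signature, and
expanding `ρ` in the orthogonal vectors of nonzero square gives the lattice Weyl vector.
-/

section Congruence

variable {n R K : Type*} [Fintype n] [DecidableEq n] [CommRing R] [Field K]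

/-- Congruence of square matrices: `A` and `B` are Gram matrices of the same bilinear form in two
bases, the columns of the invertible matrix `P` being the second basis in terms of the first. -/
def IsCongruent (A B : Matrix n n R) : Prop :=
  ∃ P : Matrix n n R, IsUnit P.det ∧ Pᵀ * A * P = B

namespace IsCongruent

theorem trans {A B C : Matrix n n R} : IsCongruent A B → IsCongruent B C → IsCongruent A C := by
  rintro ⟨P, hP, rfl⟩ ⟨Q, hQ, rfl⟩
  refine ⟨P * Q, ?_, ?_⟩
  · rw [det_mul]
    exact hP.mul hQ
  · simp only [transpose_mul, Matrix.mul_assoc]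

theorem rank_eq {A B : Matrix n n R} : IsCongruent A B → A.rank = B.rank := by
  rintro ⟨P, hP, rfl⟩
  have hPt : IsUnit Pᵀ.det := by rwa [det_transpose]
  rw [rank_mul_eq_left_of_isUnit_det P _ hP, rank_mul_eq_right_of_isUnit_det Pᵀ A hPt]

theorem map_of_det_ne_zero {A B P : Matrix n n R} {f : R →+* K} (hf : Function.Injective f)
    (hP : P.det ≠ 0) (h : Pᵀ * A * P = B) : IsCongruent (A.map f) (B.map f) := by
  refine ⟨P.map f, ?_, ?_⟩
  · rw [← RingHom.mapMatrix_apply, ← RingHom.map_det, isUnit_iff_ne_zero]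
    exact (map_ne_zero_iff f hf).mpr hP
  · rw [← h, Matrix.map_mul, Matrix.map_mul, transpose_map]

theorem diagonal_sign (d : n → ℝ) :
    IsCongruent (diagonal d) (diagonal fun i ↦ (SignType.sign (d i) : ℝ)) := by
  let s : n → ℝ := fun i ↦ if d i = 0 then 1 else (√|d i|)⁻¹
  have hs_ne (i : n) : s i ≠ 0 := by
    by_cases hi : d i = 0 <;> simp [s, hi]
  have hs_sq (i : n) : s i * d i * s i = SignType.sign (d i) := by
    by_cases hi : d i = 0
    · simp [hi]
    · calc s i * d i * s i = d i * (√|d i| * √|d i|)⁻¹ := by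
            simp only [s, if_neg hi, mul_inv]
            ring
        _ = SignType.sign (d i) * |d i| * |d i|⁻¹ := by
            rw [Real.mul_self_sqrt (abs_nonneg _), sign_mul_abs]
        _ = SignType.sign (d i) := mul_inv_cancel_right₀ (abs_ne_zero.mpr hi) _
  refine ⟨diagonal s, ?_, ?_⟩
  · rw [det_diagonal, isUnit_iff_ne_zero]
    exact Finset.prod_ne_zero_iff.mpr fun i _ ↦ hs_ne i
  · simp only [diagonal_transpose, diagonal_mul_diagonal, hs_sq]

end IsCongruent

end Congruence

/-- Symmetric generalized Cartan matrices. For symmetric `A` the usual condition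
`A i j = 0 ↔ A j i = 0` is automatic. -/
def IsSymmGenCartanMatrix {n : Type*} (A : Matrix n n ℤ) : Prop :=
  Aᵀ = A ∧ (∀ i, A i i = 2) ∧ ∀ i j, i ≠ j → A i j ≤ 0

section WeylVector

variable {n R : Type*} [Fintype n] [NonAssocRing R]

/-- The vector `ρ = ∑ cⱼ αⱼ` is a lattice Weyl vector for the Gram matrix `A` of simple roots `αᵢ`
of square `2`: one has `(ρ, αᵢ) = -(αᵢ, αᵢ) / 2 = -1` for every `i`. -/
def IsLatticeWeylVector (A : Matrix n n R) (c : n → R) : Prop :=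
  ∀ i, (A *ᵥ c) i = -1

theorem IsLatticeWeylVector.dotProduct_mulVec {A : Matrix n n R} {c : n → R}
    (hc : IsLatticeWeylVector A c) : c ⬝ᵥ A *ᵥ c = -∑ i, c i := by
  simp only [dotProduct, hc _, mul_neg_one, Finset.sum_neg_distrib]

end WeylVector

namespace CartanA1III

/-- The Gram matrix `A_{1,III}` of the simple roots `α₁, …, α₅`. -/
def cartanMatrix : Matrix (Fin 5) (Fin 5) ℤ :=
  !![2, -2, -6, -6, -2;
    -2, 2, 0, -6, -7;
    -6, 0, 2, -2, -6;
    -6, -6, -2, 2, 0;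
    -2, -7, -6, 0, 2]

theorem isSymmGenCartanMatrix_cartanMatrix : IsSymmGenCartanMatrix cartanMatrix := by
  refine ⟨by decide, by decide, fun i ↦ ?_⟩
  fin_cases i <;> decide

/-- The matrix whose columns are the coordinates, in the simple roots, of an orthogonal family:
`α₂`, `α₃`, `α₁ + α₂ + 3α₃`, followed by two elements of the radical. -/
def orthogonalFamily : Matrix (Fin 5) (Fin 5) ℤ :=
  !![0, 0, 1, -1, -3;
    1, 0, 1, 2, 4;
    0, 1, 3, -2, -3;
    0, 0, 0, 1, 0;
    0, 0, 0, 0, 2]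

theorem orthogonalFamily_det : orthogonalFamily.det = 2 := by
  simp [orthogonalFamily, det_succ_row_zero, Fin.sum_univ_succ, Fin.succAbove]

theorem orthogonalFamily_gram :
    orthogonalFamilyᵀ * cartanMatrix * orthogonalFamily = diagonal ![2, 2, -18, 0, 0] := by
  decide

theorem isCongruent_diagonal {K : Type*} [Field K] [CharZero K] :
    IsCongruent (cartanMatrix.map (Int.cast : ℤ → K)) (diagonal ![2, 2, -18, 0, 0]) := by
  have hdet : orthogonalFamily.det ≠ 0 := by simp [orthogonalFamily_det]
  have hdiag : (diagonal ![2, 2, -18, 0, 0] : Matrix (Fin 5) (Fin 5) ℤ).map (Int.castRingHom K) =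
      diagonal ![2, 2, -18, 0, 0] := by
    rw [diagonal_map (map_zero _)]
    congr 1
    ext i
    fin_cases i <;> simp
  simpa only [hdiag] using! IsCongruent.map_of_det_ne_zero
    (f := Int.castRingHom K) Int.cast_injective hdet orthogonalFamily_gram

theorem rank_cartanMatrix {K : Type*} [Field K] [CharZero K] :
    (cartanMatrix.map (Int.cast : ℤ → K)).rank = 3 := by
  classical
  rw [isCongruent_diagonal.rank_eq, rank_diagonal, Fintype.card_subtype, Finset.card_filter]
  simp [Fin.sum_univ_succ]

theorem isCongruent_signature :
    IsCongruent (cartanMatrix.map (Int.cast : ℤ → ℝ)) (diagonal ![1, 1, -1, 0, 0]) := by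
  have hsign : (fun i ↦ (SignType.sign ((![2, 2, -18, 0, 0] : Fin 5 → ℝ) i) : ℝ)) =
      ![1, 1, -1, 0, 0] := by
    ext i
    fin_cases i <;> simp
  simpa only [hsign] using isCongruent_diagonal.trans (IsCongruent.diagonal_sign _)

/-- The coordinates of `ρ = -α₂ / 2 - α₃ / 2 + 5 (α₁ + α₂ + 3α₃) / 18`. -/
def weylVector : Fin 5 → ℚ :=
  ![5 / 18, -2 / 9, 1 / 3, 0, 0]

theorem isLatticeWeylVector_weylVector :
    IsLatticeWeylVector (cartanMatrix.map (Int.cast : ℤ → ℚ)) weylVector := by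
  intro i
  fin_cases i <;>
    norm_num [cartanMatrix, weylVector, mulVec, dotProduct, Fin.sum_univ_succ]

theorem weylVector_sq_neg :
    weylVector ⬝ᵥ cartanMatrix.map (Int.cast : ℤ → ℚ) *ᵥ weylVector < 0 := by
  rw [isLatticeWeylVector_weylVector.dotProduct_mulVec]
  norm_num [weylVector, Fin.sum_univ_succ]

end CartanA1III

/-- The matrix `A_{1,III}` from Nikulin's list of all twelve symmetric hyperbolic
generalized Cartan matrices of rank 3 with finite-volume fundamental chamber and
lattice Weyl vector of negative square:
(a) it is a symmetric generalized Cartan matrix;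
(b) it has rank 3 over ℚ;
(c) the real quadratic form x ↦ xᵀAx is equivalent to the weighted sum of squares with
    weights (1,1,-1,0,…,0), i.e. A is hyperbolic of rank 3;
(d) it has a lattice Weyl vector of negative square: there is c ∈ ℚ^5 with
    Ac = -(1,…,1)ᵀ and cᵀAc < 0. -/
theorem stmt_3 :
    let A : Matrix (Fin 5) (Fin 5) ℤ :=
      !![2, -2, -6, -6, -2;
        -2, 2, 0, -6, -7;
        -6, 0, 2, -2, -6;
        -6, -6, -2, 2, 0;
        -2, -7, -6, 0, 2]
    -- (a) symmetric generalized Cartan matrix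
    (Aᵀ = A ∧ (∀ i, A i i = 2) ∧ (∀ i j, i ≠ j → A i j ≤ 0)) ∧
    -- (b) rank 3 over ℚ
    (A.map ((↑·) : ℤ → ℚ)).rank = 3 ∧
    -- (c) hyperbolic of rank 3: x ↦ xᵀAx over ℝ is equivalent to the weighted
    -- sum of squares with weights (1,1,-1,0,…,0)
    (∃ P : Matrix (Fin 5) (Fin 5) ℝ, IsUnit P.det ∧
      Pᵀ * A.map ((↑·) : ℤ → ℝ) * P = Matrix.diagonal ![(1:ℝ),1,-1,0,0]) ∧
    -- (d) lattice Weyl vector of negative square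
    (∃ c : Fin 5 → ℚ, (∀ i, (A.map ((↑·) : ℤ → ℚ)).mulVec c i = -1) ∧
      c ⬝ᵥ (A.map ((↑·) : ℤ → ℚ)).mulVec c < 0) := by
  exact ⟨CartanA1III.isSymmGenCartanMatrix_cartanMatrix, CartanA1III.rank_cartanMatrix,
    CartanA1III.isCongruent_signature, CartanA1III.weylVector,
    CartanA1III.isLatticeWeylVector_weylVector, CartanA1III.weylVector_sq_neg⟩
end

section
/- The 4×4 integer matrix A_{2,I} = [[2,-2,-4,0],[-2,2,0,-4],[-4,0,2,-2],[0,-4,-2,2]] satisfies: (a) it is a symmetric generalized Cartan matrix (symmetric, all diagonal entries 2, all off-diagonal entries nonpositive); (b) it has rank 3 over ℚ; (c) the real quadratic form x ↦ xᵀAx on ℝ⁴ is equivalent to the weighted sum of squares with weights (1,1,−1,0), i.e. A is hyperbolic of rank 3; (d) there exists c ∈ ℚ⁴ with Ac = −(1,1,1,1)ᵀ and cᵀAc < 0 (a lattice Weyl vector of negative square). -/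
open Matrix

/-!
The matrix is the group matrix of the Klein four-group for the vector `(2, -2, -4, 0)`, so the
characters of that group diagonalise it, with eigenvalues `-4, 0, 4, 8`. The signs of the
eigenvalues give the rank and the signature. The trivial character, with the negative eigenvalue
`-4`, is proportional to the lattice Weyl vector.
-/

section Congruence

variable {n R : Type*} [Fintype n] [DecidableEq n]

theorem rank_eq_card_of_congruent_diagonal [Field R] {M Q : Matrix n n R} {d : n → R}
    (hQ : IsUnit Q.det) (h : Qᵀ * M * Q = diagonal d) :
    M.rank = Nat.card {i // d i ≠ 0} := by
  classical
  have hQt : IsUnit Qᵀ.det := by rwa [det_transpose]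
  calc
    M.rank = (Qᵀ * M * Q).rank := by
      rw [rank_mul_eq_left_of_isUnit_det _ _ hQ, rank_mul_eq_right_of_isUnit_det _ _ hQt]
    _ = Nat.card {i // d i ≠ 0} := by rw [h, rank_diagonal, Nat.card_eq_fintype_card]

theorem exists_congruent_diagonal_of_rescale [CommRing R] {M Q : Matrix n n R} {d s w : n → R}
    (hQ : IsUnit Q.det) (h : Qᵀ * M * Q = diagonal d) (σ : Equiv.Perm n)
    (hs : ∀ i, IsUnit (s i)) (hw : ∀ i, s i ^ 2 * d (σ i) = w i) :
    ∃ P : Matrix n n R, IsUnit P.det ∧ Pᵀ * M * P = diagonal w := by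
  refine ⟨Q.submatrix id σ * diagonal s, ?_, ?_⟩
  · rw [det_mul, det_permute', det_diagonal]
    have hsign : IsUnit ((Equiv.Perm.sign σ : ℤ) : R) :=
      (Equiv.Perm.sign σ).isUnit.map (Int.castRingHom R)
    exact (hsign.mul hQ).mul (IsUnit.prod_univ_iff.mpr hs)
  · have hpermute : (Q.submatrix id σ)ᵀ * M * Q.submatrix id σ = diagonal (d ∘ σ) := by
      rw [← submatrix_diagonal_equiv, ← h]
      rfl
    calc
      (Q.submatrix id σ * diagonal s)ᵀ * M * (Q.submatrix id σ * diagonal s)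
          = diagonal s * ((Q.submatrix id σ)ᵀ * M * Q.submatrix id σ) * diagonal s := by
        simp only [transpose_mul, diagonal_transpose, Matrix.mul_assoc]
      _ = diagonal w := by
        rw [hpermute, diagonal_mul_diagonal, diagonal_mul_diagonal]
        congr 1
        ext i
        rw [← hw, Function.comp_apply]
        ring

end Congruence

theorem exists_mulVec_eq_neg_one_of_row_sum_neg {n K : Type*} [Fintype n] [Nonempty n] [Field K]
    [LinearOrder K] [IsStrictOrderedRing K] {M : Matrix n n K} {r : K} (hr : r < 0)
    (hM : ∀ i, ∑ j, M i j = r) :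
    ∃ c : n → K, (∀ i, (M *ᵥ c) i = -1) ∧ c ⬝ᵥ M *ᵥ c < 0 := by
  let c : n → K := fun _ => -r⁻¹
  have hc : ∀ i, (M *ᵥ c) i = -1 := fun i => calc
    (M *ᵥ c) i = (∑ j, M i j) * -r⁻¹ := (Finset.sum_mul ..).symm
    _ = -1 := by rw [hM, mul_neg, mul_inv_cancel₀ hr.ne]
  refine ⟨c, hc, Finset.sum_neg (fun i _ => ?_) Finset.univ_nonempty⟩
  rw [hc, mul_neg_one, neg_neg]
  exact inv_lt_zero.mpr hr

section KleinMatrix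

variable {R S : Type*}

/-- The group matrix of the Klein four-group: the entry at `(i, j)` is the value of `v` at `i + j`,
where the group is identified with `Fin 4` through binary digits (so `i + j` is bitwise xor). -/
def kleinMatrix (v : Fin 4 → R) : Matrix (Fin 4) (Fin 4) R :=
  !![v 0, v 1, v 2, v 3;
    v 1, v 0, v 3, v 2;
    v 2, v 3, v 0, v 1;
    v 3, v 2, v 1, v 0]

theorem kleinMatrix_map (f : R → S) (v : Fin 4 → R) :
    (kleinMatrix v).map f = kleinMatrix (f ∘ v) := by
  ext i j
  fin_cases i <;> fin_cases j <;> rfl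

theorem kleinMatrix_transpose (v : Fin 4 → R) : (kleinMatrix v)ᵀ = kleinMatrix v := by
  ext i j
  fin_cases i <;> fin_cases j <;> rfl

theorem kleinMatrix_apply_self (v : Fin 4 → R) (i : Fin 4) : kleinMatrix v i i = v 0 := by
  fin_cases i <;> rfl

theorem kleinMatrix_apply_nonpos_of_ne [Zero R] [LE R] {v : Fin 4 → R}
    (hv : ∀ k ≠ 0, v k ≤ 0) {i j : Fin 4} (hij : i ≠ j) : kleinMatrix v i j ≤ 0 := by
  obtain ⟨k, hk, hkv⟩ : ∃ k ≠ 0, kleinMatrix v i j = v k := by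
    fin_cases i <;> fin_cases j <;>
      first
      | exact absurd rfl hij
      | exact ⟨1, by decide, rfl⟩
      | exact ⟨2, by decide, rfl⟩
      | exact ⟨3, by decide, rfl⟩
  exact hkv ▸ hv k hk

theorem sum_kleinMatrix_row [AddCommMonoid R] (v : Fin 4 → R) (i : Fin 4) :
    ∑ j, kleinMatrix v i j = ∑ j, v j := by
  fin_cases i <;> simp [kleinMatrix, Fin.sum_univ_four] <;> abel

variable (R) in
/-- The character table of the Klein four-group, with the group identified with `Fin 4` as in
`kleinMatrix`. -/
def kleinCharacterTable [Ring R] : Matrix (Fin 4) (Fin 4) R :=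
  !![1, 1, 1, 1;
    1, -1, 1, -1;
    1, 1, -1, -1;
    1, -1, -1, 1]

variable (R) in
theorem kleinCharacterTable_transpose [Ring R] :
    (kleinCharacterTable R)ᵀ = kleinCharacterTable R := by
  ext i j
  fin_cases i <;> fin_cases j <;> rfl

variable (R) in
theorem kleinCharacterTable_mul_self [Ring R] :
    kleinCharacterTable R * kleinCharacterTable R = diagonal fun _ => 4 := by
  ext i j
  fin_cases i <;> fin_cases j <;>
    simp [kleinCharacterTable, mul_apply, Fin.sum_univ_four] <;> norm_num

theorem isUnit_det_kleinCharacterTable [CommRing R] (h : IsUnit (4 : R)) :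
    IsUnit (kleinCharacterTable R).det := by
  refine isUnit_of_mul_isUnit_left (y := (kleinCharacterTable R).det) ?_
  rw [← det_mul, kleinCharacterTable_mul_self, det_diagonal]
  exact IsUnit.prod_univ_iff.mpr fun _ => h

theorem kleinMatrix_mul_kleinCharacterTable [CommRing R] (v : Fin 4 → R) :
    kleinMatrix v * kleinCharacterTable R =
      kleinCharacterTable R * diagonal (kleinCharacterTable R *ᵥ v) := by
  ext i j
  fin_cases i <;> fin_cases j <;>
    simp [kleinMatrix, kleinCharacterTable, mul_apply, dotProduct, Fin.sum_univ_four] <;>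
    ring

theorem kleinMatrix_congruent_diagonal [CommRing R] (v : Fin 4 → R) :
    (kleinCharacterTable R)ᵀ * kleinMatrix v * kleinCharacterTable R =
      diagonal fun i => 4 * (kleinCharacterTable R *ᵥ v) i := by
  rw [kleinCharacterTable_transpose, Matrix.mul_assoc, kleinMatrix_mul_kleinCharacterTable,
    ← Matrix.mul_assoc, kleinCharacterTable_mul_self, diagonal_mul_diagonal]

end KleinMatrix

/-- The matrix `A_{2,I}`, as a group matrix of the Klein four-group. -/
def cartanA2I : Matrix (Fin 4) (Fin 4) ℤ := kleinMatrix ![2, -2, -4, 0]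

theorem cartanA2I_congruent_diagonal (R : Type*) [CommRing R] :
    (kleinCharacterTable R)ᵀ * cartanA2I.map (Int.cast : ℤ → R) * kleinCharacterTable R =
      diagonal ![-16, 0, 16, 32] := by
  rw [cartanA2I, kleinMatrix_map, kleinMatrix_congruent_diagonal]
  congr 1
  ext i
  fin_cases i <;>
    simp [kleinCharacterTable, mulVec, dotProduct, Fin.sum_univ_four] <;> norm_num

theorem rank_cartanA2I : (cartanA2I.map (Int.cast : ℤ → ℚ)).rank = 3 := by
  rw [rank_eq_card_of_congruent_diagonal (isUnit_det_kleinCharacterTable (by norm_num))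
    (cartanA2I_congruent_diagonal ℚ), Nat.card_eq_fintype_card]
  decide

theorem cartanA2I_congruent_sign_diagonal :
    ∃ P : Matrix (Fin 4) (Fin 4) ℝ, IsUnit P.det ∧
      Pᵀ * cartanA2I.map (Int.cast : ℤ → ℝ) * P = diagonal ![1, 1, -1, 0] := by
  -- The shift by `2` lists the diagonal entries as `16, 32, -16, 0`.
  refine exists_congruent_diagonal_of_rescale (s := ![1 / 4, √2 / 8, 1 / 4, 1])
    (isUnit_det_kleinCharacterTable (by norm_num)) (cartanA2I_congruent_diagonal ℝ)
    (Equiv.addRight 2) (fun i => ?_) (fun i => ?_)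
  · fin_cases i <;> simp
  · fin_cases i <;> simp [div_pow] <;> norm_num

theorem exists_weyl_vector_cartanA2I :
    ∃ c : Fin 4 → ℚ, (∀ i, (cartanA2I.map (Int.cast : ℤ → ℚ) *ᵥ c) i = -1) ∧
      c ⬝ᵥ cartanA2I.map (Int.cast : ℤ → ℚ) *ᵥ c < 0 := by
  refine exists_mulVec_eq_neg_one_of_row_sum_neg (r := -4) (by norm_num) fun i => ?_
  rw [cartanA2I, kleinMatrix_map, sum_kleinMatrix_row]
  simp [Fin.sum_univ_four]

/-- The matrix `A_{2,I}` from Nikulin's list of all twelve symmetric hyperbolic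
generalized Cartan matrices of rank 3 with finite-volume fundamental chamber and
lattice Weyl vector of negative square:
(a) it is a symmetric generalized Cartan matrix;
(b) it has rank 3 over ℚ;
(c) the real quadratic form x ↦ xᵀAx is equivalent to the weighted sum of squares with
    weights (1,1,-1,0,…,0), i.e. A is hyperbolic of rank 3;
(d) it has a lattice Weyl vector of negative square: there is c ∈ ℚ^4 with
    Ac = -(1,…,1)ᵀ and cᵀAc < 0. -/
theorem stmt_5 :
    let A : Matrix (Fin 4) (Fin 4) ℤ :=
      !![2, -2, -4, 0;
        -2, 2, 0, -4;
        -4, 0, 2, -2;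
        0, -4, -2, 2]
    -- (a) symmetric generalized Cartan matrix
    (Aᵀ = A ∧ (∀ i, A i i = 2) ∧ (∀ i j, i ≠ j → A i j ≤ 0)) ∧
    -- (b) rank 3 over ℚ
    (A.map ((↑·) : ℤ → ℚ)).rank = 3 ∧
    -- (c) hyperbolic of rank 3: x ↦ xᵀAx over ℝ is equivalent to the weighted
    -- sum of squares with weights (1,1,-1,0,…,0)
    (∃ P : Matrix (Fin 4) (Fin 4) ℝ, IsUnit P.det ∧
      Pᵀ * A.map ((↑·) : ℤ → ℝ) * P = Matrix.diagonal ![(1:ℝ),1,-1,0]) ∧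
    -- (d) lattice Weyl vector of negative square
    (∃ c : Fin 4 → ℚ, (∀ i, (A.map ((↑·) : ℤ → ℚ)).mulVec c i = -1) ∧
      c ⬝ᵥ (A.map ((↑·) : ℤ → ℚ)).mulVec c < 0) := by
  intro A
  have hA : A = cartanA2I := rfl
  have hdiag : ∀ i, cartanA2I i i = 2 := kleinMatrix_apply_self _
  have hoffDiag : ∀ i j, i ≠ j → cartanA2I i j ≤ 0 := fun _ _ =>
    kleinMatrix_apply_nonpos_of_ne (by decide)
  rw [hA]
  exact ⟨⟨kleinMatrix_transpose _, hdiag, hoffDiag⟩, rank_cartanA2I,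
    cartanA2I_congruent_sign_diagonal, exists_weyl_vector_cartanA2I⟩
end
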